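/- Let a ≥ 2 and n be integers with n ≥ 3a + 5. Then ρ(G_2(a−1, n−2a−5, a−1)) > ρ(G_2(a, n−2a−7, a)). -/

import Mathlib

/-!
Write `t = ρ²`. By symmetry the Perron vector of `G₂(a, b, a)` takes equal values on the two arms,
so `ρ²` is the largest root of a cubic `φ_{a,b}`. These cubics satisfy
`φ_{a,b+2}(t) = φ_{a+1,b}(t) + (t - 1) (2 a - b - t)`. At `t = ρ(G₂(a + 1, b, a + 1))²`, which
exceeds `a + 2`, the first term on the right vanishes and the second is negative as soon as
`a ≤ b + 2`; hence `φ_{a,b+2}` still has a larger root.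
-/

open SimpleGraph

/-- Adjacency matrix of a simple graph over ℝ. -/
noncomputable def adjMat {V : Type*} (G : SimpleGraph V) : Matrix V V ℝ :=
  Matrix.of fun i j => @ite ℝ (G.Adj i j) (Classical.propDecidable _) 1 0

/-- Spectral radius: the largest eigenvalue (supremum of the real spectrum)
of the adjacency matrix. -/
noncomputable def specRad {V : Type*} [Fintype V] [DecidableEq V]
    (G : SimpleGraph V) : ℝ :=
  sSup (spectrum ℝ (adjMat G))

/-- `D` is a dominating set of `G`. -/
def IsDomSet {V : Type*} (G : SimpleGraph V) (D : Finset V) : Prop :=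
  ∀ v ∉ D, ∃ u ∈ D, G.Adj u v

/-- The domination number of `G`. -/
noncomputable def domNum {V : Type*} [Fintype V] (G : SimpleGraph V) : ℕ :=
  sInf {k | ∃ D : Finset V, IsDomSet G D ∧ D.card = k}

/-- The tree `G₂(a,b,c)`: the path v1 v4 v5 v2 v6 v7 v3 (vertices `Sum.inl 0, …, Sum.inl 6`
in path order), with `a` pendant edges at v1, `b` pendant edges at v2 and `c` pendant
edges at v3. -/
def G2graph (a b c : ℕ) : SimpleGraph (Fin 7 ⊕ (Fin a ⊕ Fin b ⊕ Fin c)) :=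
  SimpleGraph.fromRel (fun x y =>
    (x = Sum.inl 0 ∧ y = Sum.inl 1) ∨
    (x = Sum.inl 1 ∧ y = Sum.inl 2) ∨
    (x = Sum.inl 2 ∧ y = Sum.inl 3) ∨
    (x = Sum.inl 3 ∧ y = Sum.inl 4) ∨
    (x = Sum.inl 4 ∧ y = Sum.inl 5) ∨
    (x = Sum.inl 5 ∧ y = Sum.inl 6) ∨
    (∃ j : Fin a, x = Sum.inl 0 ∧ y = Sum.inr (Sum.inl j)) ∨
    (∃ j : Fin b, x = Sum.inl 3 ∧ y = Sum.inr (Sum.inr (Sum.inl j))) ∨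
    (∃ j : Fin c, x = Sum.inl 6 ∧ y = Sum.inr (Sum.inr (Sum.inr j))))

section Spectrum

open Matrix

variable {n K : Type*} [Fintype n] [DecidableEq n] [Field K] {M : Matrix n n K} {μ : K}

lemma mem_spectrum_iff_exists_mulVec_eq_smul :
    μ ∈ spectrum K M ↔ ∃ v ≠ 0, M *ᵥ v = μ • v := by
  rw [← spectrum_toLin', ← Module.End.hasEigenvalue_iff_mem_spectrum]
  constructor
  · intro h
    obtain ⟨v, hv⟩ := h.exists_hasEigenvector
    exact ⟨v, hv.2, by simpa using hv.apply_eq_smul⟩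
  · rintro ⟨v, hv, h⟩
    exact Module.End.hasEigenvalue_of_hasEigenvector
      ⟨Module.End.mem_eigenspace_iff.mpr (by simpa using h), hv⟩

lemma abs_le_of_mem_spectrum_of_mulVec_le_smul [LinearOrder K] [IsStrictOrderedRing K]
    (hM : ∀ i j, 0 ≤ M i j) {f : n → K} (hf : ∀ i, 0 < f i) {s : K} (hfs : M *ᵥ f ≤ s • f)
    (hμ : μ ∈ spectrum K M) : |μ| ≤ s := by
  obtain ⟨w, hw, hwμ⟩ := mem_spectrum_iff_exists_mulVec_eq_smul.mp hμ
  obtain ⟨k, hk⟩ := Function.ne_iff.mp hw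
  obtain ⟨i, -, hi⟩ := Finset.exists_max_image Finset.univ (fun j => |w j| / f j) ⟨k, by simp⟩
  -- `|w| ≤ r f` with equality at `i`; compare the `i`-th entries of `M |w| ≤ r M f`.
  set r := |w i| / f i
  have hr_pos : 0 < r := (div_pos (abs_pos.mpr hk) (hf k)).trans_le (hi k (by simp))
  have hwi : |w i| = r * f i := (div_mul_cancel₀ _ (hf i).ne').symm
  have hw_le (j : n) : |w j| ≤ r * f j := (div_le_iff₀ (hf j)).mp (hi j (by simp))
  have key : |μ| * (r * f i) ≤ s * (r * f i) := calc
    |μ| * (r * f i) = |∑ j, M i j * w j| := by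
      rw [← hwi, ← abs_mul]
      exact congrArg abs (congrFun hwμ i).symm
    _ ≤ ∑ j, |M i j * w j| := Finset.abs_sum_le_sum_abs _ _
    _ ≤ ∑ j, M i j * (r * f j) := by
      refine Finset.sum_le_sum fun j _ => ?_
      rw [abs_mul, abs_of_nonneg (hM i j)]
      exact mul_le_mul_of_nonneg_left (hw_le j) (hM i j)
    _ = r * (M *ᵥ f) i := by
      simp only [mulVec, dotProduct, Finset.mul_sum, mul_left_comm]
    _ ≤ r * (s * f i) := mul_le_mul_of_nonneg_left (hfs i) hr_pos.le
    _ = s * (r * f i) := mul_left_comm _ _ _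
  exact le_of_mul_le_mul_right key (mul_pos hr_pos (hf i))

end Spectrum

section SpecRad

open Matrix

lemma adjMat_nonneg {V : Type*} (G : SimpleGraph V) (i j : V) : 0 ≤ adjMat G i j := by
  simp only [adjMat, of_apply]
  split_ifs <;> norm_num

variable {V : Type*} [Fintype V] [DecidableEq V] {G : SimpleGraph V} {f : V → ℝ} {s : ℝ}

lemma le_specRad_of_mulVec_eq_smul (hf : f ≠ 0) (h : adjMat G *ᵥ f = s • f) : s ≤ specRad G :=
  le_csSup (adjMat G).finite_spectrum.bddAbove
    (mem_spectrum_iff_exists_mulVec_eq_smul.mpr ⟨f, hf, h⟩)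

lemma specRad_eq_of_pos_of_mulVec_eq_smul [Nonempty V] (hf : ∀ i, 0 < f i)
    (h : adjMat G *ᵥ f = s • f) : specRad G = s := by
  have hf_ne : f ≠ 0 := fun h0 => (hf (Classical.arbitrary V)).ne' (congrFun h0 _)
  refine IsGreatest.csSup_eq ⟨mem_spectrum_iff_exists_mulVec_eq_smul.mpr ⟨f, hf_ne, h⟩, ?_⟩
  exact fun μ hμ => (le_abs_self μ).trans
    (abs_le_of_mem_spectrum_of_mulVec_le_smul (adjMat_nonneg G) hf h.le hμ)

end SpecRad

section QuotientPolynomial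

open Set Filter

/-- The arm polynomial `A_a`: if `χ` is the characteristic polynomial of the arm of `G₂(a, b, c)`
spanned by `v5`, `v4`, `v1` and the `a` pendant vertices at `v1`, then
`x * χ(x) = x ^ a * A_a (x ^ 2)`. -/
def armPoly (a t : ℝ) : ℝ := (t - a) * (t - 1) - t

/-- The quotient polynomial `φ_{a,b}`: for `a, b ≥ 1`, identifying the two arms of `G₂(a, b, a)`
and the pendant vertices at a common neighbour leaves a quotient matrix on six classes, and
`φ_{a,b} (x ^ 2)` is its characteristic polynomial. -/
def quotientPoly (a b t : ℝ) : ℝ := (t - b) * armPoly a t - 2 * t * (t - a - 1)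

variable {a b : ℝ}

lemma armPoly_strictMonoOn (ha : 0 ≤ a) : StrictMonoOn (armPoly a) (Ici (a + 1)) := by
  intro r hr t _ hrt
  have hsum : a + 2 < t + r := by linarith [mem_Ici.mp hr]
  have hdiff : armPoly a t - armPoly a r = (t - r) * (t + r - (a + 2)) := by
    simp only [armPoly]; ring
  exact sub_pos.mp (hdiff ▸ mul_pos (sub_pos.mpr hrt) (sub_pos.mpr hsum))

lemma exists_armPoly_eq_zero (ha : 0 ≤ a) : ∃ r, a + 1 < r ∧ armPoly a r = 0 := by
  have hcont : Continuous (armPoly a) := by unfold armPoly; fun_prop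
  have hsign : (0 : ℝ) ∈ Ioc (armPoly a (a + 1)) (armPoly a (a + 2)) := by
    constructor <;> simp only [armPoly] <;> linarith
  obtain ⟨r, hr, hr0⟩ := intermediate_value_Ioc (by linarith) hcont.continuousOn hsign
  exact ⟨r, hr.1, hr0⟩

lemma eventually_quotientPoly_pos (a b : ℝ) : ∀ᶠ t in atTop, 0 < quotientPoly a b t := by
  filter_upwards [eventually_ge_atTop (a + 2), eventually_ge_atTop (b + 4),
    eventually_ge_atTop (5 : ℝ)] with t hta htb ht
  have harm : armPoly a t = (t - 1) * (t - a - 1) - 1 := by simp only [armPoly]; ring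
  have hprod : 2 * (t - a - 1) + 2 < t * (t - a - 1) := by nlinarith [ht]
  have harm_pos : 0 < armPoly a t := by linarith
  calc 0 < 4 * armPoly a t - 2 * t * (t - a - 1) := by linarith
    _ ≤ quotientPoly a b t := by
      unfold quotientPoly
      gcongr
      linarith

lemma exists_quotientPoly_eq_zero_of_neg {t₀ : ℝ} (h : quotientPoly a b t₀ < 0) :
    ∃ t, t₀ < t ∧ quotientPoly a b t = 0 := by
  have hcont : Continuous (quotientPoly a b) := by unfold quotientPoly armPoly; fun_prop
  obtain ⟨T, hT, hpos⟩ :=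
    ((eventually_ge_atTop t₀).and (eventually_quotientPoly_pos a b)).exists
  obtain ⟨t, ht, ht0⟩ := intermediate_value_Ioo hT hcont.continuousOn ⟨h, hpos⟩
  exact ⟨t, ht.1, ht0⟩

lemma exists_armPoly_pos_and_quotientPoly_eq_zero (ha : 0 ≤ a) (b : ℝ) :
    ∃ t, a + 1 < t ∧ 0 < armPoly a t ∧ quotientPoly a b t = 0 := by
  obtain ⟨r, hr, hr0⟩ := exists_armPoly_eq_zero ha
  have hneg : quotientPoly a b r < 0 := by
    have : 0 < 2 * r * (r - a - 1) := mul_pos (by linarith) (by linarith)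
    rw [quotientPoly, hr0]
    linarith
  obtain ⟨t, hrt, ht0⟩ := exists_quotientPoly_eq_zero_of_neg hneg
  have hat : a + 1 < t := hr.trans hrt
  exact ⟨t, hat, hr0 ▸ armPoly_strictMonoOn ha hr.le hat.le hrt, ht0⟩

lemma quotientPoly_add_two (a b t : ℝ) :
    quotientPoly a (b + 2) t = quotientPoly (a + 1) b t + (t - 1) * (2 * a - b - t) := by
  simp only [quotientPoly, armPoly]; ring

end QuotientPolynomial

section G2graph

open Matrix

lemma adjMat_G2graph_mulVec (a b c : ℕ) (v : Fin 7 ⊕ (Fin a ⊕ Fin b ⊕ Fin c) → ℝ) :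
    adjMat (G2graph a b c) *ᵥ v = Sum.elim
      ![v (.inl 1) + ∑ j, v (.inr (.inl j)),
        v (.inl 0) + v (.inl 2),
        v (.inl 1) + v (.inl 3),
        v (.inl 2) + v (.inl 4) + ∑ j, v (.inr (.inr (.inl j))),
        v (.inl 3) + v (.inl 5),
        v (.inl 4) + v (.inl 6),
        v (.inl 5) + ∑ j, v (.inr (.inr (.inr j)))]
      (Sum.elim (fun _ => v (.inl 0))
        (Sum.elim (fun _ => v (.inl 3)) (fun _ => v (.inl 6)))) := by
  funext i
  rcases i with i | i | i | i
  · fin_cases i <;>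
      simp [mulVec, dotProduct, adjMat, G2graph, Fin.sum_univ_seven]
  all_goals simp [mulVec, dotProduct, adjMat, G2graph]

/-- The eigenvector of `G₂(a, b, a)` for an eigenvalue `s` with `φ_{a,b} (s ^ 2) = 0`: it takes
equal values on the two arms, and is normalised to be `s` at the outer pendant vertices. -/
def G2eigenvector (a b : ℕ) (s : ℝ) : Fin 7 ⊕ (Fin a ⊕ Fin b ⊕ Fin a) → ℝ :=
  Sum.elim
    ![s ^ 2, s * (s ^ 2 - a), s ^ 2 * (s ^ 2 - a - 1), s * armPoly a (s ^ 2),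
      s ^ 2 * (s ^ 2 - a - 1), s * (s ^ 2 - a), s ^ 2]
    (Sum.elim (fun _ => s) (Sum.elim (fun _ => armPoly a (s ^ 2)) (fun _ => s)))

variable {a b : ℕ} {s t : ℝ}

lemma adjMat_G2graph_mulVec_G2eigenvector (h : quotientPoly a b (s ^ 2) = 0) :
    adjMat (G2graph a b a) *ᵥ G2eigenvector a b s = s • G2eigenvector a b s := by
  have hcentre : 2 * (s ^ 2 * (s ^ 2 - a - 1)) + b * armPoly a (s ^ 2) =
      s * (s * armPoly a (s ^ 2)) := by
    unfold quotientPoly at h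
    linear_combination -h
  rw [adjMat_G2graph_mulVec]
  funext i
  rcases i with i | i | i | i
  · unfold armPoly at hcentre
    fin_cases i <;> simp [G2eigenvector, armPoly] <;> linarith
  all_goals simp [G2eigenvector, sq]

lemma G2eigenvector_pos (hs : 0 < s) (has : a + 1 < s ^ 2) (harm : 0 < armPoly a (s ^ 2))
    (i : Fin 7 ⊕ (Fin a ⊕ Fin b ⊕ Fin a)) : 0 < G2eigenvector a b s i := by
  have hv4 : 0 < s ^ 2 - a := by linarith
  have hv5 : 0 < s ^ 2 - a - 1 := by linarith
  rcases i with i | i | i | i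
  · fin_cases i <;> dsimp [G2eigenvector] <;> positivity
  all_goals simpa [G2eigenvector]

lemma specRad_G2graph_eq_sqrt (hat : a + 1 < t) (harm : 0 < armPoly a t)
    (h : quotientPoly a b t = 0) : specRad (G2graph a b a) = √t := by
  have ht : 0 < t := (by positivity : (0 : ℝ) < a + 1).trans hat
  rw [← Real.sq_sqrt ht.le] at hat harm h
  exact specRad_eq_of_pos_of_mulVec_eq_smul
    (G2eigenvector_pos (Real.sqrt_pos.mpr ht) hat harm) (adjMat_G2graph_mulVec_G2eigenvector h)

lemma sqrt_le_specRad_G2graph (ht : 0 < t) (h : quotientPoly a b t = 0) :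
    √t ≤ specRad (G2graph a b a) := by
  rw [← Real.sq_sqrt ht.le] at h
  refine le_specRad_of_mulVec_eq_smul (fun h0 => ht.ne' ?_) (adjMat_G2graph_mulVec_G2eigenvector h)
  simpa [G2eigenvector, Real.sq_sqrt ht.le] using congrFun h0 (.inl 0)

lemma sqrt_lt_specRad_G2graph (ht : 0 ≤ t) (h : quotientPoly a b t < 0) :
    √t < specRad (G2graph a b a) := by
  obtain ⟨u, htu, hu⟩ := exists_quotientPoly_eq_zero_of_neg h
  exact (Real.sqrt_lt_sqrt ht htu).trans_le (sqrt_le_specRad_G2graph (ht.trans_lt htu) hu)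

end G2graph

theorem specRad_G2_compare_large_n_general (a b : ℕ) (hab : a ≤ b + 2) :
    specRad (G2graph (a + 1) b (a + 1)) < specRad (G2graph a (b + 2) a) := by
  have hab' : (a : ℝ) ≤ b + 2 := mod_cast hab
  obtain ⟨t, hat, harm, ht⟩ :=
    exists_armPoly_pos_and_quotientPoly_eq_zero (Nat.cast_nonneg (a + 1)) b
  rw [specRad_G2graph_eq_sqrt hat harm ht]
  push_cast at hat ht
  have ht_one : 1 < t := by linarith [a.cast_nonneg (α := ℝ)]
  refine sqrt_lt_specRad_G2graph (zero_le_one.trans ht_one.le) ?_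
  push_cast
  rw [quotientPoly_add_two, ht, zero_add]
  exact mul_neg_of_pos_of_neg (sub_pos.mpr ht_one) (by linarith)

theorem specRad_G2_compare_large_n (a n : ℕ) (ha : 2 ≤ a) (hn : 3 * a + 5 ≤ n) :
    specRad (G2graph a (n - 2 * a - 7) a) <
      specRad (G2graph (a - 1) (n - 2 * a - 5) (a - 1)) := by
  have h := specRad_G2_compare_large_n_general (a - 1) (n - 2 * a - 7) (by omega)
  rwa [show a - 1 + 1 = a by omega, show n - 2 * a - 7 + 2 = n - 2 * a - 5 by omega] at h
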